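/- For every m×n sign matrix S (entries in {−1,1}), sign-rank(S) ≥ mn/γ₂*(S), where γ₂*(S) = sup{ |Tr(Sᵀ B)| : B an m×n real matrix with γ₂(B) ≤ 1 }. -/

import Mathlib

/-- The sign rank of a real matrix `S` (intended with entries in `{-1,1}`): the minimum
rank over all real matrices whose entrywise signs agree with `S`. -/
noncomputable def signRank {m n : ℕ} (S : Matrix (Fin m) (Fin n) ℝ) : ℕ :=
  sInf {r | ∃ M : Matrix (Fin m) (Fin n) ℝ,
    (∀ i j, Real.sign (M i j) = S i j) ∧ M.rank = r}

/-- The `γ₂` norm of a real matrix: the infimum of `max_{i,j} ‖xᵢ‖₂·‖yⱼ‖₂` over all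
factorizations `A = X Yᵀ`, where `xᵢ` are the rows of `X` and `yⱼ` the rows of `Y`. -/
noncomputable def gamma2 {m n : ℕ} (A : Matrix (Fin m) (Fin n) ℝ) : ℝ :=
  sInf {c : ℝ | ∃ k : ℕ, ∃ X : Matrix (Fin m) (Fin k) ℝ, ∃ Y : Matrix (Fin n) (Fin k) ℝ,
    A = X * Y.transpose ∧
    c = ⨆ i : Fin m, ⨆ j : Fin n,
      Real.sqrt (∑ l, X i l ^ 2) * Real.sqrt (∑ l, Y j l ^ 2)}

/-- The dual `γ₂` norm: `γ₂*(A) = sup {|Tr(Aᵀ B)| : γ₂(B) ≤ 1}`. -/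
noncomputable def gamma2Star {m n : ℕ} (A : Matrix (Fin m) (Fin n) ℝ) : ℝ :=
  sSup {r : ℝ | ∃ B : Matrix (Fin m) (Fin n) ℝ, gamma2 B ≤ 1 ∧
    r = |Matrix.trace (A.transpose * B)|}

/-!
Forster's argument, made independent of general position. Factor a sign-realising `M` of rank `d`
as `X * Yᵀ`, with rows `x i` and `y j` in `ℝ^d`. For positive definite `P`, dividing `M i j` by the
square roots of `x iᵀ P x i` and `y jᵀ P⁻¹ y j` gives a matrix `B` with `γ₂(B) ≤ 1` and the signs
of `M`. If `P` maximises `det P ^ m / ∏ i, (x iᵀ P x i) ^ d`, then stationarity along the rank one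
directions `y j * (y j)ᵀ` makes every column of `B` have square sum at least `m / d`. As
`|B i j| ≤ 1`, this yields `m * n / d ≤ ∑ B i j ^ 2 ≤ ∑ S i j * B i j ≤ γ₂*(S)`.

A maximiser need not exist for special positions of the `x i`, so the rank one forms `x i * (x i)ᵀ`
are replaced by `x i * (x i)ᵀ + η • 1`. All `M i j` being nonzero, this costs only a factor `1 + ε`,
and `ε → 0` at the end.
-/

open Matrix

section RealInequalities

theorem le_of_forall_pos_le_add_mul {a b c : ℝ} (h : ∀ s > 0, a ≤ b + s * c) : a ≤ b := by
  have hlim : Filter.Tendsto (fun s : ℝ => b + s * c) (nhdsWithin 0 (Set.Ioi 0)) (nhds b) := by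
    have : Continuous fun s : ℝ => b + s * c := by fun_prop
    simpa using (this.tendsto 0).mono_left nhdsWithin_le_nhds
  exact ge_of_tendsto hlim (Filter.eventually_of_mem self_mem_nhdsWithin h)

theorem exists_pos_forall_mul_le {ι : Type*} [Finite ι] (f : ι → ℝ) {g : ι → ℝ}
    (hg : ∀ i, 0 < g i) : ∃ η > 0, ∀ i, η * f i ≤ g i := by
  have hsmall : ∀ᶠ η : ℝ in nhdsWithin 0 (Set.Ioi 0), ∀ i, η * f i < g i := by
    refine Filter.eventually_all.2 fun i => mem_nhdsWithin_of_mem_nhds ?_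
    have hcont : ContinuousAt (fun η : ℝ => η * f i) 0 := by fun_prop
    exact hcont.eventually_lt_const (by simpa using hg i)
  obtain ⟨η, hη, hpos⟩ := (hsmall.and self_mem_nhdsWithin).exists
  exact ⟨η, hpos, fun i => (hη i).le⟩

theorem mul_le_mul_sum_of_pow_le_prod_pow {ι : Type*} [Fintype ι] {m d : ℕ} {a : ℝ} {b : ι → ℝ}
    (ha : 0 ≤ a) (hb : ∀ i, 0 ≤ b i)
    (h : ∀ s > 0, (1 + s * a) ^ m ≤ ∏ i, (1 + s * b i) ^ d) :
    m * a ≤ d * ∑ i, b i := by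
  set c := d * ∑ i, b i
  refine le_of_forall_pos_le_add_mul (c := c * (m * a)) fun s hs => ?_
  have hexp : 1 + m * (s * a) ≤ Real.exp (s * c) := calc
    1 + m * (s * a) ≤ (1 + s * a) ^ m :=
      one_add_mul_le_pow (by linarith [mul_nonneg hs.le ha]) m
    _ ≤ ∏ i, (1 + s * b i) ^ d := h s hs
    _ ≤ ∏ i, Real.exp (s * b i) ^ d := by
      have hsb : ∀ i, 0 ≤ s * b i := fun i => mul_nonneg hs.le (hb i)
      refine Finset.prod_le_prod (fun i _ => pow_nonneg (by linarith [hsb i]) d) fun i _ => ?_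
      exact pow_le_pow_left₀ (by linarith [hsb i]) (by linarith [Real.add_one_le_exp (s * b i)]) d
    _ = Real.exp (s * c) := by
      simp only [← Real.exp_nat_mul, ← Real.exp_sum, c, Finset.mul_sum, mul_left_comm]
  have hinv : (1 - s * c) * (1 + m * (s * a)) ≤ 1 := calc
    (1 - s * c) * (1 + m * (s * a)) ≤ Real.exp (-(s * c)) * Real.exp (s * c) := by
      gcongr
      linarith [Real.add_one_le_exp (-(s * c))]
    _ = 1 := by rw [← Real.exp_add, neg_add_cancel, Real.exp_zero]
  refine le_of_mul_le_mul_left ?_ hs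
  linarith

end RealInequalities

section MatrixAlgebra

variable {n : Type*} [Fintype n]

theorem exists_eq_mul_transpose {m K : Type*} [Field K] (M : Matrix m n K) :
    ∃ (X : Matrix m (Fin M.rank) K) (Y : Matrix n (Fin M.rank) K), M = X * Yᵀ := by
  classical
  let b := Module.finBasisOfFinrankEq K M.mulVecLin.range rfl
  let column (j : n) : M.mulVecLin.range := ⟨M *ᵥ Pi.single j 1, LinearMap.mem_range_self _ _⟩
  refine ⟨of fun i l => (b l : m → K) i, of fun j l => b.repr (column j) l, ?_⟩
  ext i j
  calc M i j = (column j : m → K) i := by simp [column]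
    _ = (∑ l, b.repr (column j) l • b l : M.mulVecLin.range).1 i := by rw [b.sum_repr]
    _ = ∑ l, (b l : m → K) i * b.repr (column j) l := by
      simp [mul_comm, -Module.Basis.sum_repr]

theorem det_add_smul_vecMulVec {R : Type*} [CommRing R] [DecidableEq n] {P : Matrix n n R}
    (hP : IsUnit P.det) (s : R) (u v : n → R) :
    (P + s • vecMulVec u v).det = P.det * (1 + s * (v ⬝ᵥ P⁻¹ *ᵥ u)) := by
  rw [← smul_vecMulVec, vecMulVec_eq Unit, det_add_replicateCol_mul_replicateRow hP,
    Matrix.mul_assoc, ← replicateCol_mulVec, det_one_add_mul_comm,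
    det_one_add_replicateCol_mul_replicateRow, mulVec_smul, dotProduct_smul, smul_eq_mul]

theorem trace_mul_add_smul_vecMulVec {R : Type*} [CommRing R] (T P : Matrix n n R) (s : R)
    (u v : n → R) :
    (T * (P + s • vecMulVec u v)).trace = (T * P).trace + s * (v ⬝ᵥ T *ᵥ u) := by
  rw [Matrix.mul_add, Matrix.mul_smul, trace_add, trace_smul, mul_vecMulVec, trace_vecMulVec,
    smul_eq_mul, dotProduct_comm]

theorem dotProduct_mulVec_diagonal_mul {m R : Type*} [Fintype m] [DecidableEq m] [CommRing R]
    (r : m → R) (X : Matrix m n R) (P : Matrix n n R) (i : m) :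
    (diagonal r * X) i ⬝ᵥ P *ᵥ (diagonal r * X) i = r i ^ 2 * (X i ⬝ᵥ P *ᵥ X i) := by
  have hrow : (diagonal r * X) i = r i • X i := funext fun l => diagonal_mul r X i l
  rw [hrow, mulVec_smul, dotProduct_smul, smul_dotProduct, smul_smul, smul_eq_mul, sq]

variable {𝕜 : Type*} [RCLike 𝕜]

open scoped ComplexOrder MatrixOrder in
theorem exists_eq_conjTranspose_mul_self {P : Matrix n n 𝕜} (hP : P.PosSemidef) :
    ∃ A : Matrix n n 𝕜, P = Aᴴ * A := by
  classical
  exact CStarAlgebra.nonneg_iff_eq_star_mul_self.1 hP.nonneg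

open scoped ComplexOrder in
theorem trace_mul_pos_of_posDef_of_posSemidef {T P : Matrix n n 𝕜} (hT : T.PosDef)
    (hP : P.PosSemidef) (hP0 : P ≠ 0) : 0 < (T * P).trace := by
  classical
  obtain ⟨C, rfl⟩ := exists_eq_conjTranspose_mul_self hT.posSemidef
  obtain ⟨A, rfl⟩ := exists_eq_conjTranspose_mul_self hP
  have hfactor : (Cᴴ * C * (Aᴴ * A)).trace = ((C * Aᴴ)ᴴ * (C * Aᴴ)).trace := by
    rw [conjTranspose_mul, conjTranspose_conjTranspose, ← Matrix.mul_assoc, trace_mul_comm]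
    simp only [Matrix.mul_assoc]
  have hC : IsUnit C := isUnit_of_mul_isUnit_right hT.isUnit
  rw [hfactor]
  refine (posSemidef_conjTranspose_mul_self _).trace_nonneg.lt_of_ne' fun h0 => hP0 ?_
  rw [trace_conjTranspose_mul_self_eq_zero_iff] at h0
  rw [hC.mul_left_cancel (h0.trans (Matrix.mul_zero C).symm), Matrix.zero_mul]

end MatrixAlgebra

section ScalingRatio

variable {ι n : Type*} [Fintype ι] [Fintype n] {T : ι → Matrix n n ℝ}

theorem prod_trace_mul_pow_pos (hT : ∀ i, (T i).PosDef) {P : Matrix n n ℝ} (hP : P.PosSemidef)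
    (hP0 : P ≠ 0) (k : ℕ) : 0 < ∏ i, (T i * P).trace ^ k :=
  Finset.prod_pos fun i _ => pow_pos (trace_mul_pos_of_posDef_of_posSemidef (hT i) hP hP0) k

variable [DecidableEq n]

/-- The scale-invariant quotient `det P ^ |ι| / ∏ i, tr (T i * P) ^ |n|` attached to a family `T`
of `n × n` matrices. At a positive definite maximiser `P`, stationarity reads
`|ι| P⁻¹ ≤ |n| ∑ i, T i / tr (T i * P)` in the Loewner order. -/
noncomputable def scalingRatio (T : ι → Matrix n n ℝ) (P : Matrix n n ℝ) : ℝ :=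
  P.det ^ Fintype.card ι / ∏ i, (T i * P).trace ^ Fintype.card n

theorem scalingRatio_smul (T : ι → Matrix n n ℝ) (P : Matrix n n ℝ) {c : ℝ} (hc : c ≠ 0) :
    scalingRatio T (c • P) = scalingRatio T P := by
  simp only [scalingRatio, det_smul, Matrix.mul_smul, trace_smul, smul_eq_mul, mul_pow,
    Finset.prod_mul_distrib, Finset.prod_const, Finset.card_univ, ← pow_mul]
  exact mul_div_mul_left _ _ (pow_ne_zero _ hc)

theorem scalingRatio_add_smul_vecMulVec {P : Matrix n n ℝ} (hP : IsUnit P.det)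
    (hTP : ∀ i, (T i * P).trace ≠ 0) (s : ℝ) (z : n → ℝ) :
    scalingRatio T (P + s • vecMulVec z z) = scalingRatio T P *
      ((1 + s * (z ⬝ᵥ P⁻¹ *ᵥ z)) ^ Fintype.card ι /
        ∏ i, (1 + s * ((z ⬝ᵥ T i *ᵥ z) / (T i * P).trace)) ^ Fintype.card n) := by
  have hfactor : ∀ i, (T i * P).trace + s * (z ⬝ᵥ T i *ᵥ z) =
      (T i * P).trace * (1 + s * ((z ⬝ᵥ T i *ᵥ z) / (T i * P).trace)) := fun i => by
    field_simp [hTP i]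
  simp only [scalingRatio, det_add_smul_vecMulVec hP, trace_mul_add_smul_vecMulVec, hfactor,
    mul_pow, Finset.prod_mul_distrib, mul_div_mul_comm]

open scoped Matrix.Norms.Elementwise in
theorem exists_forall_scalingRatio_conjTranspose_mul_self_le [Nonempty n]
    (hT : ∀ i, (T i).PosDef) :
    ∃ A : Matrix n n ℝ, ∀ B ≠ 0, scalingRatio T (Bᴴ * B) ≤ scalingRatio T (Aᴴ * A) := by
  have hne : (Metric.sphere (0 : Matrix n n ℝ) 1).Nonempty :=
    NormedSpace.sphere_nonempty.2 zero_le_one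
  have hcont : ContinuousOn (fun A : Matrix n n ℝ => scalingRatio T (Aᴴ * A))
      (Metric.sphere 0 1) := by
    refine ContinuousOn.div (by fun_prop) (by fun_prop) fun A hA => ?_
    exact (prod_trace_mul_pow_pos hT (posSemidef_conjTranspose_mul_self A)
      (conjTranspose_mul_self_eq_zero.not.2 (ne_zero_of_mem_unit_sphere ⟨A, hA⟩)) _).ne'
  obtain ⟨A, -, hmax⟩ := (isCompact_sphere _ _).exists_isMaxOn hne hcont
  refine ⟨A, fun B hB => ?_⟩
  have hB' : ‖B‖⁻¹ ≠ 0 := inv_ne_zero (norm_ne_zero_iff.2 hB)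
  calc scalingRatio T (Bᴴ * B)
      = scalingRatio T ((‖B‖⁻¹ • B)ᴴ * (‖B‖⁻¹ • B)) := by
        rw [conjTranspose_smul, star_trivial, smul_mul_smul_comm,
          scalingRatio_smul T _ (mul_ne_zero hB' hB')]
    _ ≤ scalingRatio T (Aᴴ * A) := hmax (by
        rw [mem_sphere_zero_iff_norm, norm_smul, norm_inv, norm_norm,
          inv_mul_cancel₀ (norm_ne_zero_iff.2 hB)])

theorem exists_posDef_forall_scalingRatio_le (hT : ∀ i, (T i).PosDef) :
    ∃ P : Matrix n n ℝ, P.PosDef ∧ ∀ Q, Q.PosDef → scalingRatio T Q ≤ scalingRatio T P := by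
  rcases isEmpty_or_nonempty ι with _ | _
  · exact ⟨1, PosDef.one, fun Q _ => by simp [scalingRatio]⟩
  rcases isEmpty_or_nonempty n with _ | _
  · exact ⟨1, PosDef.one, fun Q _ => (congrArg _ (Subsingleton.elim Q 1)).le⟩
  obtain ⟨A, hmax⟩ := exists_forall_scalingRatio_conjTranspose_mul_self_le hT
  have hratio : 0 < scalingRatio T (Aᴴ * A) := calc
    0 < scalingRatio T (1ᴴ * 1) := by
      rw [conjTranspose_one, Matrix.mul_one, scalingRatio, det_one, one_pow]
      exact one_div_pos.2 (prod_trace_mul_pow_pos hT PosSemidef.one one_ne_zero _)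
    _ ≤ scalingRatio T (Aᴴ * A) := hmax 1 one_ne_zero
  refine ⟨Aᴴ * A, (posSemidef_conjTranspose_mul_self A).posDef_iff_det_ne_zero.2 fun hdet => ?_,
    fun Q hQ => ?_⟩
  · rw [scalingRatio, hdet, zero_pow Fintype.card_ne_zero, zero_div] at hratio
    exact hratio.false
  · obtain ⟨B, rfl⟩ := exists_eq_conjTranspose_mul_self hQ.posSemidef
    exact hmax B (conjTranspose_mul_self_eq_zero.not.1 hQ.isUnit.ne_zero)

theorem card_mul_dotProduct_inv_mulVec_le (hT : ∀ i, (T i).PosDef) {P : Matrix n n ℝ}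
    (hP : P.PosDef) (hmax : ∀ Q, Q.PosDef → scalingRatio T Q ≤ scalingRatio T P) (z : n → ℝ) :
    Fintype.card ι * (z ⬝ᵥ P⁻¹ *ᵥ z) ≤
      Fintype.card n * ∑ i, (z ⬝ᵥ T i *ᵥ z) / (T i * P).trace := by
  rcases eq_or_ne z 0 with rfl | hz
  · simp
  have : Nonempty n := (Function.ne_iff.1 hz).nonempty
  have htrace : ∀ i, 0 < (T i * P).trace := fun i =>
    trace_mul_pos_of_posDef_of_posSemidef (hT i) hP.posSemidef hP.isUnit.ne_zero
  have hb : ∀ i, 0 ≤ (z ⬝ᵥ T i *ᵥ z) / (T i * P).trace := fun i =>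
    div_nonneg ((hT i).posSemidef.dotProduct_mulVec_nonneg z) (htrace i).le
  refine mul_le_mul_sum_of_pow_le_prod_pow (hP.inv.posSemidef.dotProduct_mulVec_nonneg z) hb
    fun s hs => ?_
  have hratio : 0 < scalingRatio T P := div_pos (pow_pos hP.det_pos _)
    (prod_trace_mul_pow_pos hT hP.posSemidef hP.isUnit.ne_zero _)
  have hle := hmax _ (hP.add_posSemidef ((posSemidef_vecMulVec_self_star z).smul hs.le))
  rw [star_trivial, scalingRatio_add_smul_vecMulVec hP.det_pos.ne'.isUnit (htrace · |>.ne'),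
    mul_le_iff_le_one_right hratio] at hle
  exact (div_le_one (Finset.prod_pos fun i _ =>
    pow_pos (add_pos_of_pos_of_nonneg one_pos (mul_nonneg hs.le (hb i))) _)).1 hle

theorem exists_posDef_card_mul_le (x : ι → n → ℝ) {η : ℝ} (hη : 0 < η) :
    ∃ P : Matrix n n ℝ, P.PosDef ∧ ∀ z : n → ℝ,
      Fintype.card ι * (z ⬝ᵥ P⁻¹ *ᵥ z) ≤ Fintype.card n *
        ∑ i, (η * (z ⬝ᵥ z) + (x i ⬝ᵥ z) ^ 2) / (η * P.trace + x i ⬝ᵥ P *ᵥ x i) := by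
  let T (i : ι) : Matrix n n ℝ := η • 1 + vecMulVec (x i) (x i)
  have hT : ∀ i, (T i).PosDef := fun i =>
    (PosDef.one.smul hη).add_posSemidef (posSemidef_vecMulVec_self_star (x i))
  have hquad : ∀ i z, z ⬝ᵥ T i *ᵥ z = η * (z ⬝ᵥ z) + (x i ⬝ᵥ z) ^ 2 := fun i z => by
    simp [T, add_mulVec, vecMulVec_mulVec, smul_mulVec, dotProduct_comm z (x i), sq]
  have htrace : ∀ i P, (T i * P).trace = η * P.trace + x i ⬝ᵥ P *ᵥ x i := fun i P => by
    simp [T, Matrix.add_mul, vecMulVec_mul, trace_vecMulVec, dotProduct_mulVec, dotProduct_comm]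
  obtain ⟨P, hP, hmax⟩ := exists_posDef_forall_scalingRatio_le hT
  refine ⟨P, hP, fun z => ?_⟩
  simpa only [hquad, htrace] using card_mul_dotProduct_inv_mulVec_le hT hP hmax z

-- The perturbation `η` can be chosen before `P`, because `η * (y j ⬝ᵥ y j)` is compared with
-- `(x i ⬝ᵥ y j) ^ 2` only.
theorem exists_posDef_card_mul_le_mul_sum_sq_div {κ : Type*} [Finite κ] {x : ι → n → ℝ}
    {y : κ → n → ℝ} (hxy : ∀ i j, x i ⬝ᵥ y j ≠ 0) {ε : ℝ} (hε : 0 < ε) :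
    ∃ (P : Matrix n n ℝ) (t : ι → ℝ), P.PosDef ∧ (∀ i, x i ⬝ᵥ P *ᵥ x i ≤ t i) ∧
      ∀ j, Fintype.card ι * (y j ⬝ᵥ P⁻¹ *ᵥ y j) ≤
        (1 + ε) * (Fintype.card n * ∑ i, (x i ⬝ᵥ y j) ^ 2 / t i) := by
  obtain ⟨η, hη, hsmall⟩ := exists_pos_forall_mul_le (fun p : ι × κ => y p.2 ⬝ᵥ y p.2)
    (g := fun p => ε * (x p.1 ⬝ᵥ y p.2) ^ 2) fun p => by have := hxy p.1 p.2; positivity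
  obtain ⟨P, hP, hforster⟩ := exists_posDef_card_mul_le x hη
  have hx : ∀ i, 0 ≤ x i ⬝ᵥ P *ᵥ x i := fun i => hP.posSemidef.dotProduct_mulVec_nonneg (x i)
  have htrace : 0 ≤ η * P.trace := mul_nonneg hη.le hP.posSemidef.trace_nonneg
  refine ⟨P, fun i => η * P.trace + x i ⬝ᵥ P *ᵥ x i, hP, fun i => le_add_of_nonneg_left htrace,
    fun j => (hforster (y j)).trans ?_⟩
  rw [mul_left_comm, Finset.mul_sum _ _ (1 + ε)]
  gcongr with i
  rw [← mul_div_assoc]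
  gcongr
  · exact add_nonneg htrace (hx i)
  · linarith [hsmall (i, j)]

end ScalingRatio

section GammaTwo

variable {m n : ℕ}

theorem gamma2_mul_transpose_le {k : ℕ} {X : Matrix (Fin m) (Fin k) ℝ}
    {Y : Matrix (Fin n) (Fin k) ℝ} {c : ℝ} (hc : 0 ≤ c)
    (h : ∀ i j, √(X i ⬝ᵥ X i) * √(Y j ⬝ᵥ Y j) ≤ c) : gamma2 (X * Yᵀ) ≤ c := by
  simp only [dotProduct, ← sq] at h
  rw [gamma2]
  refine csInf_le_of_le ⟨0, ?_⟩ ⟨k, X, Y, rfl, rfl⟩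
    (Real.iSup_le (fun i => Real.iSup_le (h i) hc) hc)
  rintro _ ⟨k, X, Y, -, rfl⟩
  exact Real.iSup_nonneg fun i => Real.iSup_nonneg fun j => by positivity

theorem gamma2_mul_transpose_le_of_posDef {k : ℕ} {X : Matrix (Fin m) (Fin k) ℝ}
    {Y : Matrix (Fin n) (Fin k) ℝ} {P : Matrix (Fin k) (Fin k) ℝ} (hP : P.PosDef) {c : ℝ}
    (hc : 0 ≤ c) (h : ∀ i j, √(X i ⬝ᵥ P *ᵥ X i) * √(Y j ⬝ᵥ P⁻¹ *ᵥ Y j) ≤ c) :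
    gamma2 (X * Yᵀ) ≤ c := by
  obtain ⟨A, rfl⟩ := exists_eq_conjTranspose_mul_self hP.posSemidef
  rw [conjTranspose_eq_transpose_of_trivial] at hP h
  have hA : IsUnit A.det := (isUnit_iff_isUnit_det A).1 (isUnit_of_mul_isUnit_right hP.isUnit)
  have hfactor : X * Yᵀ = (X * Aᵀ) * (Y * A⁻¹)ᵀ := by
    rw [transpose_mul, Matrix.mul_assoc, ← Matrix.mul_assoc Aᵀ, ← transpose_mul,
      nonsing_inv_mul A hA, transpose_one, Matrix.one_mul]
  have hX : ∀ i, (X * Aᵀ) i ⬝ᵥ (X * Aᵀ) i = X i ⬝ᵥ (Aᵀ * A) *ᵥ X i := fun i => by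
    rw [mul_apply_eq_vecMul, vecMul_transpose, ← mulVec_mulVec, dotProduct_mulVec (X i),
      vecMul_transpose]
  have hY : ∀ j, (Y * A⁻¹) j ⬝ᵥ (Y * A⁻¹) j = Y j ⬝ᵥ (Aᵀ * A)⁻¹ *ᵥ Y j := fun j => by
    rw [mul_apply_eq_vecMul, Matrix.mul_inv_rev, ← transpose_nonsing_inv, ← mulVec_mulVec,
      mulVec_transpose, dotProduct_mulVec]
  rw [hfactor]
  exact gamma2_mul_transpose_le hc fun i j => by rw [hX, hY]; exact h i j

theorem gamma2_diagonal_mul_mul_diagonal_le_one {k : ℕ} {X : Matrix (Fin m) (Fin k) ℝ}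
    {Y : Matrix (Fin n) (Fin k) ℝ} {P : Matrix (Fin k) (Fin k) ℝ} (hP : P.PosDef)
    {r : Fin m → ℝ} {c : Fin n → ℝ} (hr : ∀ i, r i ^ 2 * (X i ⬝ᵥ P *ᵥ X i) ≤ 1)
    (hc : ∀ j, c j ^ 2 * (Y j ⬝ᵥ P⁻¹ *ᵥ Y j) ≤ 1) :
    gamma2 (diagonal r * (X * Yᵀ) * diagonal c) ≤ 1 := by
  have hfactor : diagonal r * (X * Yᵀ) * diagonal c = diagonal r * X * (diagonal c * Y)ᵀ := by
    rw [transpose_mul, diagonal_transpose, Matrix.mul_assoc, Matrix.mul_assoc, Matrix.mul_assoc]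
  have hX : ∀ i, (diagonal r * X) i ⬝ᵥ P *ᵥ (diagonal r * X) i = r i ^ 2 * (X i ⬝ᵥ P *ᵥ X i) :=
    fun i => dotProduct_mulVec_diagonal_mul r X P i
  have hY : ∀ j, (diagonal c * Y) j ⬝ᵥ P⁻¹ *ᵥ (diagonal c * Y) j =
      c j ^ 2 * (Y j ⬝ᵥ P⁻¹ *ᵥ Y j) := fun j => dotProduct_mulVec_diagonal_mul c Y P⁻¹ j
  rw [hfactor]
  refine gamma2_mul_transpose_le_of_posDef hP zero_le_one fun i j => ?_
  rw [hX, hY]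
  exact mul_le_one₀ (Real.sqrt_le_one.2 (hr i)) (Real.sqrt_nonneg _) (Real.sqrt_le_one.2 (hc j))

theorem abs_apply_le_gamma2 (B : Matrix (Fin m) (Fin n) ℝ) (i : Fin m) (j : Fin n) :
    |B i j| ≤ gamma2 B := by
  refine le_csInf ⟨_, n, B, 1, by simp, rfl⟩ ?_
  rintro _ ⟨k, X, Y, rfl, rfl⟩
  calc |(X * Yᵀ) i j| ≤ √((∑ l, X i l ^ 2) * ∑ l, Y j l ^ 2) :=
        Real.abs_le_sqrt (Finset.sum_mul_sq_le_sq_mul_sq Finset.univ (X i) (Y j))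
    _ = √(∑ l, X i l ^ 2) * √(∑ l, Y j l ^ 2) := Real.sqrt_mul (by positivity) _
    _ ≤ ⨆ j, √(∑ l, X i l ^ 2) * √(∑ l, Y j l ^ 2) :=
        le_ciSup (f := fun j => √(∑ l, X i l ^ 2) * √(∑ l, Y j l ^ 2))
          (Set.finite_range _).bddAbove j
    _ ≤ ⨆ i, ⨆ j, √(∑ l, X i l ^ 2) * √(∑ l, Y j l ^ 2) :=
        le_ciSup (f := fun i => ⨆ j, √(∑ l, X i l ^ 2) * √(∑ l, Y j l ^ 2))
          (Set.finite_range _).bddAbove i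

theorem gamma2Star_nonneg (S : Matrix (Fin m) (Fin n) ℝ) : 0 ≤ gamma2Star S := by
  refine Real.sSup_nonneg ?_
  rintro _ ⟨B, -, rfl⟩
  exact abs_nonneg _

theorem sum_mul_le_gamma2Star (S : Matrix (Fin m) (Fin n) ℝ) {B : Matrix (Fin m) (Fin n) ℝ}
    (hB : gamma2 B ≤ 1) : ∑ j, ∑ i, S i j * B i j ≤ gamma2Star S := by
  have hbdd : BddAbove {r : ℝ | ∃ B : Matrix (Fin m) (Fin n) ℝ, gamma2 B ≤ 1 ∧
      r = |(Sᵀ * B).trace|} := by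
    refine ⟨∑ j, ∑ i, |S i j|, ?_⟩
    rintro _ ⟨B, hB, rfl⟩
    change |∑ j, ∑ i, S i j * B i j| ≤ _
    refine (Finset.abs_sum_le_sum_abs _ _).trans (Finset.sum_le_sum fun j _ => ?_)
    refine (Finset.abs_sum_le_sum_abs _ _).trans (Finset.sum_le_sum fun i _ => ?_)
    rw [abs_mul]
    exact mul_le_of_le_one_right (abs_nonneg _) ((abs_apply_le_gamma2 B i j).trans hB)
  exact (le_abs_self _).trans (le_csSup hbdd ⟨B, hB, rfl⟩)

theorem sum_sq_le_gamma2Star {S B : Matrix (Fin m) (Fin n) ℝ} (hB : gamma2 B ≤ 1)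
    (hSB : ∀ i j, |B i j| ≤ S i j * B i j) : ∑ j, ∑ i, B i j ^ 2 ≤ gamma2Star S := by
  refine le_trans ?_ (sum_mul_le_gamma2Star S hB)
  refine Finset.sum_le_sum fun j _ => Finset.sum_le_sum fun i _ => ?_
  calc B i j ^ 2 = |B i j| * |B i j| := by rw [← sq, sq_abs]
    _ ≤ |B i j| := mul_le_of_le_one_right (abs_nonneg _) ((abs_apply_le_gamma2 B i j).trans hB)
    _ ≤ S i j * B i j := hSB i j

end GammaTwo

section SignRank

variable {m n : ℕ}

theorem exists_scaling_gamma2_le_one [NeZero m] [NeZero n] {M : Matrix (Fin m) (Fin n) ℝ}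
    (hM : ∀ i j, M i j ≠ 0) {ε : ℝ} (hε : 0 < ε) :
    ∃ (r : Fin m → ℝ) (c : Fin n → ℝ), (∀ i, 0 < r i) ∧ (∀ j, 0 < c j) ∧
      gamma2 (diagonal r * M * diagonal c) ≤ 1 ∧
      ∀ j, (m : ℝ) ≤ (1 + ε) * (M.rank * ∑ i, (diagonal r * M * diagonal c) i j ^ 2) := by
  obtain ⟨X, Y, hXY⟩ := exists_eq_mul_transpose M
  have hentry : ∀ i j, M i j = X i ⬝ᵥ Y j := fun i j => congrFun (congrFun hXY i) j
  obtain ⟨P, t, hP, hXt, hcol⟩ := exists_posDef_card_mul_le_mul_sum_sq_div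
    (fun i j => hentry i j ▸ hM i j) hε
  simp only [Fintype.card_fin, ← hentry] at hcol
  have hX : ∀ i, X i ≠ 0 := fun i h0 => hM i 0 (by rw [hentry, h0, zero_dotProduct])
  have hY : ∀ j, Y j ≠ 0 := fun j h0 => hM 0 j (by rw [hentry, h0, dotProduct_zero])
  have ht : ∀ i, 0 < t i := fun i => (hP.dotProduct_mulVec_pos (hX i)).trans_le (hXt i)
  have hq : ∀ j, 0 < Y j ⬝ᵥ P⁻¹ *ᵥ Y j := fun j => hP.inv.dotProduct_mulVec_pos (hY j)
  set q : Fin n → ℝ := fun j => Y j ⬝ᵥ P⁻¹ *ᵥ Y j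
  set r : Fin m → ℝ := fun i => (√(t i))⁻¹
  set c : Fin n → ℝ := fun j => (√(q j))⁻¹
  have hr : ∀ i, r i ^ 2 = (t i)⁻¹ := fun i => by rw [inv_pow, Real.sq_sqrt (ht i).le]
  have hc : ∀ j, c j ^ 2 = (q j)⁻¹ := fun j => by rw [inv_pow, Real.sq_sqrt (hq j).le]
  have hgamma : gamma2 (diagonal r * (X * Yᵀ) * diagonal c) ≤ 1 :=
    gamma2_diagonal_mul_mul_diagonal_le_one hP
      (fun i => by rw [hr]; exact inv_mul_le_one_of_le₀ (hXt i) (ht i).le)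
      (fun j => by rw [hc]; exact inv_mul_le_one_of_le₀ le_rfl (hq j).le)
  rw [← hXY] at hgamma
  refine ⟨r, c, fun i => inv_pos.2 (Real.sqrt_pos.2 (ht i)),
    fun j => inv_pos.2 (Real.sqrt_pos.2 (hq j)), hgamma, fun j => ?_⟩
  have hB : ∀ i, (diagonal r * M * diagonal c) i j ^ 2 = M i j ^ 2 / t i / q j := fun i => by
    rw [mul_diagonal, diagonal_mul, mul_pow, mul_pow, hr, hc]
    ring
  simp only [hB, ← Finset.sum_div, ← mul_div_assoc]
  exact (le_div_iff₀ (hq j)).2 (hcol j)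

theorem mul_le_rank_mul_gamma2Star {S M : Matrix (Fin m) (Fin n) ℝ} (hM : ∀ i j, M i j ≠ 0)
    (hSM : ∀ i j, |M i j| ≤ S i j * M i j) : (m * n : ℝ) ≤ M.rank * gamma2Star S := by
  have hnonneg : 0 ≤ M.rank * gamma2Star S := mul_nonneg (Nat.cast_nonneg _) (gamma2Star_nonneg S)
  rcases eq_zero_or_neZero m with rfl | _
  · simpa using hnonneg
  rcases eq_zero_or_neZero n with rfl | _
  · simpa using hnonneg
  refine le_of_forall_pos_le_add_mul (c := M.rank * gamma2Star S) fun ε hε => ?_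
  obtain ⟨r, c, hr, hc, hgamma, hcol⟩ := exists_scaling_gamma2_le_one hM hε
  set B := diagonal r * M * diagonal c with hB
  have hSB : ∀ i j, |B i j| ≤ S i j * B i j := fun i j => by
    have hscale : 0 < r i * c j := mul_pos (hr i) (hc j)
    have hentry : B i j = r i * c j * M i j := by
      rw [hB, mul_diagonal, diagonal_mul, mul_right_comm]
    rw [hentry, abs_mul, abs_of_pos hscale, mul_left_comm]
    exact mul_le_mul_of_nonneg_left (hSM i j) hscale.le
  calc (m * n : ℝ) = ∑ _j : Fin n, (m : ℝ) := by simp [mul_comm]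
    _ ≤ ∑ j, (1 + ε) * (M.rank * ∑ i, B i j ^ 2) := Finset.sum_le_sum fun j _ => hcol j
    _ = (1 + ε) * (M.rank * ∑ j, ∑ i, B i j ^ 2) := by simp only [Finset.mul_sum]
    _ ≤ (1 + ε) * (M.rank * gamma2Star S) := by
      gcongr
      exact sum_sq_le_gamma2Star hgamma hSB
    _ = M.rank * gamma2Star S + ε * (M.rank * gamma2Star S) := by ring

theorem exists_sign_eq_rank_eq_signRank {S : Matrix (Fin m) (Fin n) ℝ}
    (hS : ∀ i j, Real.sign (S i j) = S i j) :
    ∃ M : Matrix (Fin m) (Fin n) ℝ, (∀ i j, Real.sign (M i j) = S i j) ∧ M.rank = signRank S :=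
  Nat.sInf_mem (s := {r | ∃ M : Matrix (Fin m) (Fin n) ℝ,
    (∀ i j, Real.sign (M i j) = S i j) ∧ M.rank = r}) ⟨S.rank, S, hS, rfl⟩

end SignRank

/-- For every `m × n` sign matrix `S` (entries in `{-1,1}`), the sign rank is at least
`mn/γ₂*(S)`. -/
theorem signRank_ge_div_gamma2Star {m n : ℕ}
    (S : Matrix (Fin m) (Fin n) ℝ)
    (hsign : ∀ i j, S i j = -1 ∨ S i j = 1) :
    ((m * n : ℕ) : ℝ) / gamma2Star S ≤ (signRank S : ℝ) := by
  have hS : ∀ i j, Real.sign (S i j) = S i j := fun i j => by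
    rcases hsign i j with h | h <;> simp [h, Real.sign_neg, Real.sign_one]
  obtain ⟨M, hMS, hrank⟩ := exists_sign_eq_rank_eq_signRank hS
  have hM : ∀ i j, M i j ≠ 0 := fun i j h0 => by
    rcases hsign i j with h | h <;> simp [← hMS, h0] at h
  have hSM : ∀ i j, |M i j| ≤ S i j * M i j := fun i j => by
    rcases (hM i j).lt_or_gt with h | h
    · rw [← hMS, Real.sign_of_neg h, abs_of_neg h, neg_one_mul]
    · rw [← hMS, Real.sign_of_pos h, abs_of_pos h, one_mul]
  rw [← hrank]
  refine div_le_of_le_mul₀ (gamma2Star_nonneg S) (Nat.cast_nonneg _) ?_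
  exact_mod_cast mul_le_rank_mul_gamma2Star hM hSM
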